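/- arXiv:1209.6462 — 4 statements merged into one kernel-verified Lean document; each statement's English description precedes it below -/
import Mathlib

section
/- Let n ≥ 2 and let D be a digital n-object. Then the number of (n−2)-gaps of D is given by g_{n−2}(D) = (n−1)·c*_{n−1}(D) − c*_{n−2}(D); equivalently (as an identity of natural numbers), g_{n−2}(D) + c*_{n−2}(D) = (n−1)·c*_{n−1}(D). -/
/-!
Call the `(n-2)`-cells ridges and the `(n-1)`-cells faces, and count in two ways the pairs `e < f`
of a free ridge `e` and a free face `f`.

* A `k`-cell has `2k` facets, obtained by moving one of its `k` odd coordinates by `±1`. Facets of a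
  free face are free, since the block of a cell grows when the cell shrinks, so each free face lies
  in `2(n-1)` pairs.
* The block of a ridge is a `2 × 2` array of voxels, and the four faces above the ridge separate
  neighbouring voxels of this array. Such a face is free iff membership in `D` changes across it.
  Around a free ridge there are four changes if `D` fills a diagonal of the array, that is, if the
  ridge is a hub, and two otherwise.

As every hub is a free ridge, `2 c*_{n-2} + 2 g_{n-2} = 2(n-1) c*_{n-1}`.
-/

namespace DigitalGeometry

/-- The dimension of a cell of the cubical grid (doubled coordinates):
the number of odd coordinates. -/
def cdim {n : ℕ} (c : Fin n → ℤ) : ℕ :=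
  (Finset.univ.filter fun j => Odd (c j)).card

/-- The bounding relation `e < f` between cells of the grid. -/
def Bounds {n : ℕ} (e f : Fin n → ℤ) : Prop :=
  cdim e < cdim f ∧ ∀ j, e j = f j ∨ (Odd (f j) ∧ |e j - f j| = 1)

/-- A voxel is an `n`-cell: all coordinates odd. -/
def IsVoxel {n : ℕ} (v : Fin n → ℤ) : Prop := ∀ j, Odd (v j)

/-- The `i`-block centered on an `i`-cell `e`: all voxels bounded by `e`. -/
def Block {n : ℕ} (e : Fin n → ℤ) : Set (Fin n → ℤ) :=
  {v | IsVoxel v ∧ Bounds e v}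

/-- `Cells D i` : the `i`-cells of the object `D` (for `i < n` those bounding
some voxel of `D`; for `i = n` it is `D` itself). -/
def Cells {n : ℕ} (D : Set (Fin n → ℤ)) (i : ℕ) : Set (Fin n → ℤ) :=
  {e | cdim e = i ∧ (e ∈ D ∨ ∃ v ∈ D, Bounds e v)}

/-- `c_i(D)` : the number of `i`-cells of `D`. -/
noncomputable def cCount {n : ℕ} (D : Set (Fin n → ℤ)) (i : ℕ) : ℕ := (Cells D i).ncard

/-- The free `i`-cells of `D`: those whose `i`-block is not contained in `D`. -/
def FreeCells {n : ℕ} (D : Set (Fin n → ℤ)) (i : ℕ) : Set (Fin n → ℤ) :=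
  {e | e ∈ Cells D i ∧ ¬ Block e ⊆ D}

/-- `c*_i(D)` : the number of free `i`-cells of `D`. -/
noncomputable def cStar {n : ℕ} (D : Set (Fin n → ℤ)) (i : ℕ) : ℕ := (FreeCells D i).ncard

/-- The non-free `i`-cells of `D`. -/
def NonFreeCells {n : ℕ} (D : Set (Fin n → ℤ)) (i : ℕ) : Set (Fin n → ℤ) :=
  {e | e ∈ Cells D i ∧ Block e ⊆ D}

/-- `c'_i(D)` : the number of non-free `i`-cells of `D`. -/
noncomputable def cPrime {n : ℕ} (D : Set (Fin n → ℤ)) (i : ℕ) : ℕ := (NonFreeCells D i).ncard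

/-- `InterCell v1 v2 e` : the intersection of the voxels `v1`, `v2`
(as subsets of `ℝ^n`) equals the cell `e`. -/
def InterCell {n : ℕ} (v1 v2 e : Fin n → ℤ) : Prop :=
  ∀ j, (v1 j = v2 j ∧ e j = v1 j) ∨
       (e j + 1 = max (v1 j) (v2 j) ∧ e j - 1 = min (v1 j) (v2 j))

/-- `e` is an `(n-2)`-hub of `D`, i.e. `D` has an `(n-2)`-gap over `e`. -/
def IsHub {n : ℕ} (D : Set (Fin n → ℤ)) (e : Fin n → ℤ) : Prop :=
  cdim e = n - 2 ∧ ∃ v1 v2 : Fin n → ℤ, v1 ≠ v2 ∧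
    Block e ∩ D = {v1, v2} ∧ InterCell v1 v2 e

/-- `g_{n-2}(D)` : the number of `(n-2)`-gaps of `D`. -/
noncomputable def gapCount {n : ℕ} (D : Set (Fin n → ℤ)) : ℕ := {e | IsHub D e}.ncard

/-- `b_j(e, D)` : the number of free `j`-cells of `D` bounded by `e`. -/
noncomputable def bcount {n : ℕ} (e : Fin n → ℤ) (D : Set (Fin n → ℤ)) (j : ℕ) : ℕ :=
  {f | f ∈ FreeCells D j ∧ Bounds e f}.ncard

/-- Two voxels are `i`-adjacent if they are distinct and their intersection
contains an `i`-cell. -/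
def Adj {n : ℕ} (i : ℕ) (v1 v2 : Fin n → ℤ) : Prop :=
  v1 ≠ v2 ∧ ∃ e : Fin n → ℤ, cdim e = i ∧ Bounds e v1 ∧ Bounds e v2

section Shift

variable {n : ℕ} {e f : Fin n → ℤ} {a b j : Fin n} {s t : ℤˣ}

/-- The cell obtained from `e` by moving coordinate `a` one unit in the direction `s`. Moving an
even coordinate raises the dimension by one, moving an odd one lowers it. -/
def shift (e : Fin n → ℤ) (a : Fin n) (s : ℤˣ) : Fin n → ℤ :=
  e + Pi.single a (s : ℤ)

lemma shift_self : shift e a s a = e a + s := by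
  simp [shift]

lemma shift_of_ne (h : j ≠ a) : shift e a s j = e j := by
  simp [shift, h]

lemma shift_comm : shift (shift e a s) b t = shift (shift e b t) a s :=
  add_right_comm ..

lemma shift_shift_neg : shift (shift e a s) a (-s) = e := by
  simp [shift, add_assoc, ← Pi.single_add]

lemma shift_injective (e : Fin n → ℤ) :
    Function.Injective fun p : Fin n × ℤˣ ↦ shift e p.1 p.2 := by
  rintro ⟨a, s⟩ ⟨b, t⟩ h
  have ha : e a + s = shift e b t a := shift_self.symm.trans (congrFun h a)
  obtain rfl : a = b := by
    by_contra hab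
    simp [shift_of_ne hab] at ha
  simpa [shift_self, Units.ext_iff] using ha

lemma shift_eq_iff : shift e a s = f ↔ f a = e a + s ∧ ∀ j ≠ a, f j = e j := by
  constructor
  · rintro rfl
    exact ⟨shift_self, fun _ ↦ shift_of_ne⟩
  · rintro ⟨ha, hne⟩
    funext j
    obtain rfl | hj := eq_or_ne j a
    · rw [ha, shift_self]
    · rw [hne j hj, shift_of_ne hj]

end Shift

section Parity

variable {n : ℕ} {e v : Fin n → ℤ} {a j : Fin n} {s : ℤˣ}

/-- The coordinate directions in which the cell `e` is degenerate, i.e. a single point. Their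
number is the codimension of `e`. -/
def evenCoords (e : Fin n → ℤ) : Finset (Fin n) :=
  {j | Even (e j)}

lemma mem_evenCoords : j ∈ evenCoords e ↔ Even (e j) := by
  simp [evenCoords]

lemma cdim_add_card_evenCoords (e : Fin n → ℤ) : cdim e + (evenCoords e).card = n := by
  simpa [cdim, evenCoords] using
    Finset.card_filter_add_card_filter_not (s := Finset.univ) fun j ↦ Odd (e j)

lemma IsVoxel.cdim_eq (hv : IsVoxel v) : cdim v = n := by
  simp [cdim, Finset.filter_true_of_mem fun j _ ↦ hv j]

lemma even_add_unit_iff {x : ℤ} : Even (x + s) ↔ Odd x := by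
  obtain rfl | rfl := Int.units_eq_one_or s <;> simp [Int.even_add]

lemma evenCoords_shift (ha : Even (e a)) : evenCoords (shift e a s) = (evenCoords e).erase a := by
  ext j
  obtain rfl | hj := eq_or_ne j a
  · simp [mem_evenCoords, shift_self, even_add_unit_iff, ha]
  · simp [mem_evenCoords, shift_of_ne hj, hj]

lemma cdim_shift (ha : Even (e a)) : cdim (shift e a s) = cdim e + 1 := by
  have hcard := Finset.card_erase_add_one (mem_evenCoords.2 ha)
  rw [← evenCoords_shift (s := s) ha] at hcard
  have := cdim_add_card_evenCoords e
  have := cdim_add_card_evenCoords (shift e a s)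
  omega

end Parity

section Bounds

variable {n : ℕ} {e f g : Fin n → ℤ} {a j : Fin n} {s : ℤˣ}

lemma abs_sub_eq_one_iff_exists_unit {x y : ℤ} : |x - y| = 1 ↔ ∃ s : ℤˣ, y = x + s := by
  rw [abs_sub_comm, ← Int.isUnit_iff_abs_eq]
  exact exists_congr fun s ↦ by omega

lemma bounds_iff : Bounds e f ↔
    cdim e < cdim f ∧ ∀ j, f j = e j ∨ Even (e j) ∧ ∃ s : ℤˣ, f j = e j + s := by
  simp only [Bounds, abs_sub_eq_one_iff_exists_unit, eq_comm (a := e _)]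
  refine and_congr_right fun _ ↦ forall_congr' fun j ↦ or_congr_right <| and_congr_left ?_
  rintro ⟨s, hs⟩
  rw [hs, ← Int.not_even_iff_odd, even_add_unit_iff, Int.not_odd_iff_even]

lemma Bounds.trans (hef : Bounds e f) (hfg : Bounds f g) : Bounds e g := by
  rw [bounds_iff] at *
  refine ⟨hef.1.trans hfg.1, fun j ↦ ?_⟩
  obtain h | ⟨he, s, hs⟩ := hef.2 j
  · exact h ▸ hfg.2 j
  obtain h | ⟨hf, -⟩ := hfg.2 j
  · exact h ▸ hef.2 j
  · rw [hs, even_add_unit_iff] at hf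
    exact absurd he (Int.not_even_iff_odd.2 hf)

lemma bounds_shift (ha : Even (e a)) : Bounds e (shift e a s) := by
  refine bounds_iff.2 ⟨by simp [cdim_shift ha], fun j ↦ ?_⟩
  obtain rfl | hj := eq_or_ne j a
  · exact .inr ⟨ha, s, shift_self⟩
  · exact .inl (shift_of_ne hj)

lemma Bounds.mem_evenCoords_sdiff_iff (h : Bounds e f) :
    j ∈ evenCoords e \ evenCoords f ↔ f j ≠ e j := by
  rw [Finset.mem_sdiff, mem_evenCoords, mem_evenCoords]
  obtain h | ⟨he, s, hs⟩ := (bounds_iff.1 h).2 j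
  · simp [h]
  · simp [hs, even_add_unit_iff, he]

lemma Bounds.evenCoords_subset (h : Bounds e f) : evenCoords f ⊆ evenCoords e := by
  intro j hj
  by_contra hj'
  obtain h | ⟨he, -⟩ := (bounds_iff.1 h).2 j
  · exact hj' (mem_evenCoords.2 (h ▸ mem_evenCoords.1 hj))
  · exact hj' (mem_evenCoords.2 he)

lemma Bounds.abs_sub_le_one (h : Bounds e f) (j : Fin n) : |f j - e j| ≤ 1 := by
  rw [abs_sub_comm]
  obtain h | ⟨-, h⟩ := h.2 j <;> simp [h]

lemma finite_setOf_bounds (f : Fin n → ℤ) : {e | Bounds e f}.Finite := by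
  refine (Set.finite_Icc (f - 1) (f + 1)).subset fun e he ↦ ⟨fun j ↦ ?_, fun j ↦ ?_⟩ <;>
  · have := abs_le.1 (he.abs_sub_le_one j)
    simp only [Pi.sub_apply, Pi.add_apply, Pi.one_apply]
    omega

/-- The facet relation: `e` bounds `f` and has codimension one in it. -/
def IsFacet (e f : Fin n → ℤ) : Prop :=
  Bounds e f ∧ cdim f = cdim e + 1

lemma isFacet_iff_exists_even : IsFacet e f ↔ ∃ a s, Even (e a) ∧ shift e a s = f := by
  constructor
  · rintro ⟨hb, hdim⟩
    have hcard : (evenCoords e \ evenCoords f).card = 1 := by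
      have := cdim_add_card_evenCoords e
      have := cdim_add_card_evenCoords f
      rw [Finset.card_sdiff_of_subset hb.evenCoords_subset]
      omega
    obtain ⟨a, ha⟩ := Finset.card_eq_one.1 hcard
    have hne : ∀ j, f j ≠ e j ↔ j = a := fun j ↦ by
      rw [← hb.mem_evenCoords_sdiff_iff, ha, Finset.mem_singleton]
    obtain ⟨hea, s, hs⟩ := ((bounds_iff.1 hb).2 a).resolve_left ((hne a).2 rfl)
    exact ⟨a, s, hea, shift_eq_iff.2 ⟨hs, fun j hj ↦ not_not.1 (mt (hne j).1 hj)⟩⟩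
  · rintro ⟨a, s, ha, rfl⟩
    exact ⟨bounds_shift ha, cdim_shift ha⟩

lemma isFacet_iff_exists_odd : IsFacet e f ↔ ∃ a s, Odd (f a) ∧ shift f a s = e := by
  rw [isFacet_iff_exists_even]
  constructor
  · rintro ⟨a, s, ha, rfl⟩
    refine ⟨a, -s, ?_, shift_shift_neg⟩
    rwa [shift_self, ← Int.not_even_iff_odd, even_add_unit_iff, Int.not_odd_iff_even]
  · rintro ⟨a, s, ha, rfl⟩
    exact ⟨a, -s, by rwa [shift_self, even_add_unit_iff], shift_shift_neg⟩

lemma ncard_setOf_isFacet (f : Fin n → ℤ) : {e | IsFacet e f}.ncard = 2 * cdim f := by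
  have himage : {e | IsFacet e f} =
      (fun p : Fin n × ℤˣ ↦ shift f p.1 p.2) ''
        (({a | Odd (f a)} : Finset (Fin n)) ×ˢ (.univ : Finset ℤˣ) : Finset (Fin n × ℤˣ)) := by
    ext e
    simp [-UnitsInt.univ, isFacet_iff_exists_odd]
  rw [himage, Set.ncard_image_of_injective _ (shift_injective f), Set.ncard_coe_finset,
    Finset.card_product, Finset.card_univ, Fintype.card_units_int, ← cdim, mul_comm]

lemma ncard_setOf_isFacet_and (e : Fin n → ℤ) (P : (Fin n → ℤ) → Prop) [DecidablePred P] :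
    {f | IsFacet e f ∧ P f}.ncard =
      ∑ a ∈ evenCoords e, ({s | P (shift e a s)} : Finset ℤˣ).card := by
  have himage : {f | IsFacet e f ∧ P f} = (fun p : Fin n × ℤˣ ↦ shift e p.1 p.2) ''
      ({p ∈ evenCoords e ×ˢ .univ | P (shift e p.1 p.2)} : Finset (Fin n × ℤˣ)) := by
    ext f
    simp only [isFacet_iff_exists_even, Set.mem_ofPred_eq, Set.mem_image, Finset.coe_filter,
      Finset.mem_product, mem_evenCoords, Finset.mem_univ, and_true, Prod.exists]
    grind
  rw [himage, Set.ncard_image_of_injective _ (shift_injective e), Set.ncard_coe_finset]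
  simp only [Finset.card_filter, Finset.sum_product]

end Bounds

section Block

variable {n : ℕ} {e f v w : Fin n → ℤ} {a b j : Fin n} {s t s' t' : ℤˣ}

lemma Bounds.block_subset (h : Bounds e f) : Block f ⊆ Block e :=
  fun _ hv ↦ ⟨hv.1, h.trans hv.2⟩

lemma eq_of_mem_block (hv : v ∈ Block e) (hj : j ∉ evenCoords e) : v j = e j :=
  ((bounds_iff.1 hv.2).2 j).resolve_right fun h ↦ hj (mem_evenCoords.2 h.1)

lemma exists_eq_add_unit_of_mem_block (hv : v ∈ Block e) (hj : j ∈ evenCoords e) :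
    ∃ s : ℤˣ, v j = e j + s := by
  refine (((bounds_iff.1 hv.2).2 j).resolve_left fun h ↦ ?_).2
  exact Int.not_even_iff_odd.2 (hv.1 j) (h ▸ mem_evenCoords.1 hj)

lemma isVoxel_iff_evenCoords_eq_empty : IsVoxel v ↔ evenCoords v = ∅ := by
  simp [IsVoxel, evenCoords, Finset.filter_eq_empty_iff]

lemma mem_block_iff_of_evenCoords_eq_singleton (hf : evenCoords f = {a}) :
    v ∈ Block f ↔ ∃ s, shift f a s = v := by
  have ha : a ∈ evenCoords f := by simp [hf]
  constructor
  · intro hv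
    obtain ⟨s, hs⟩ := exists_eq_add_unit_of_mem_block hv ha
    exact ⟨s, shift_eq_iff.2 ⟨hs, fun j hj ↦ eq_of_mem_block hv (by simp [hf, hj])⟩⟩
  · rintro ⟨s, rfl⟩
    have ha := mem_evenCoords.1 ha
    exact ⟨isVoxel_iff_evenCoords_eq_empty.2 (by simp [evenCoords_shift ha, hf]), bounds_shift ha⟩

lemma evenCoords_shift_eq_singleton (hab : a ≠ b) (he : evenCoords e = {a, b}) :
    evenCoords (shift e a s) = {b} := by
  rw [evenCoords_shift (mem_evenCoords.1 (by simp [he])), he, Finset.erase_insert (by simpa)]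

lemma mem_block_iff_of_evenCoords_eq_pair (hab : a ≠ b) (he : evenCoords e = {a, b}) :
    v ∈ Block e ↔ ∃ s t, shift (shift e a s) b t = v := by
  have ha : a ∈ evenCoords e := by simp [he]
  constructor
  · intro hv
    obtain ⟨s, hs⟩ := exists_eq_add_unit_of_mem_block hv ha
    obtain ⟨t, ht⟩ := exists_eq_add_unit_of_mem_block hv (j := b) (by simp [he])
    refine ⟨s, t, shift_eq_iff.2 ⟨by rw [ht, shift_of_ne hab.symm], fun j hb ↦ ?_⟩⟩
    obtain rfl | ha := eq_or_ne j a
    · rw [hs, shift_self]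
    · rw [shift_of_ne ha, eq_of_mem_block hv (by simp [he, ha, hb])]
  · rintro ⟨s, t, rfl⟩
    refine (bounds_shift (s := s) (mem_evenCoords.1 ha)).block_subset ?_
    have hface := evenCoords_shift_eq_singleton (s := s) hab he
    exact (mem_block_iff_of_evenCoords_eq_singleton hface).2 ⟨t, rfl⟩

lemma shift_shift_inj (hab : a ≠ b) :
    shift (shift e a s) b t = shift (shift e a s') b t' ↔ s = s' ∧ t = t' := by
  refine ⟨fun h ↦ ?_, by rintro ⟨rfl, rfl⟩; rfl⟩
  have ha := congrFun h a
  have hb := congrFun h b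
  simp only [shift_self, shift_of_ne hab, shift_of_ne hab.symm, add_right_inj] at ha hb
  exact ⟨Units.ext ha, Units.ext hb⟩

lemma interCell_iff_add_eq (hv : ∀ j, |v j - e j| ≤ 1) : InterCell v w e ↔ v + w = 2 • e := by
  rw [InterCell, funext_iff]
  refine forall_congr' fun j ↦ ?_
  have := abs_le.1 (hv j)
  simp only [Pi.add_apply, Pi.smul_apply, nsmul_eq_mul, Nat.cast_ofNat]
  omega

lemma shift_shift_add_shift_shift_neg :
    shift (shift e a s) b t + shift (shift e a (-s)) b (-t) = 2 • e := by
  simp only [shift, Units.val_neg, Pi.single_neg]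
  abel

lemma interCell_shift_shift_iff (hv : shift (shift e a s) b t ∈ Block e) :
    InterCell (shift (shift e a s) b t) w e ↔ w = shift (shift e a (-s)) b (-t) := by
  rw [interCell_iff_add_eq hv.2.abs_sub_le_one, ← shift_shift_add_shift_shift_neg (a := a) (b := b)
    (s := s) (t := t), add_right_inj]

end Block

section FreeCells

variable {n i : ℕ} {D : Set (Fin n → ℤ)} {e f : Fin n → ℤ}

lemma mem_freeCells_iff (hvox : ∀ v ∈ D, IsVoxel v) :
    e ∈ FreeCells D i ↔ cdim e = i ∧ (∃ v ∈ Block e, v ∈ D) ∧ ∃ v ∈ Block e, v ∉ D := by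
  simp only [FreeCells, Cells, Set.mem_ofPred_eq, Set.not_subset, and_assoc]
  refine and_congr_right fun _ ↦ and_congr_left ?_
  rintro ⟨w, hw, -⟩
  have he : e ∉ D := fun he ↦ by
    have := hw.2.1
    rw [(hvox e he).cdim_eq, hw.1.cdim_eq] at this
    exact this.false
  rw [or_iff_right he]
  exact exists_congr fun v ↦
    ⟨fun ⟨hv, hb⟩ ↦ ⟨⟨hvox v hv, hb⟩, hv⟩, fun ⟨hb, hv⟩ ↦ ⟨hv, hb.2⟩⟩

lemma Bounds.mem_freeCells (h : Bounds e f) (hvox : ∀ v ∈ D, IsVoxel v)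
    (hf : f ∈ FreeCells D i) : e ∈ FreeCells D (cdim e) := by
  obtain ⟨-, ⟨v, hv, hvD⟩, w, hw, hwD⟩ := (mem_freeCells_iff hvox).1 hf
  exact (mem_freeCells_iff hvox).2
    ⟨rfl, ⟨v, h.block_subset hv, hvD⟩, w, h.block_subset hw, hwD⟩

lemma finite_freeCells (hfin : D.Finite) (hvox : ∀ v ∈ D, IsVoxel v) (i : ℕ) :
    (FreeCells D i).Finite := by
  refine (hfin.biUnion fun v _ ↦ finite_setOf_bounds v).subset fun e he ↦ ?_
  obtain ⟨-, ⟨v, hv, hvD⟩, -⟩ := (mem_freeCells_iff hvox).1 he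
  exact Set.mem_biUnion hvD hv.2

lemma ncard_freeCells_bounding (hvox : ∀ v ∈ D, IsVoxel v) (hf : f ∈ FreeCells D (i + 1)) :
    {e | e ∈ FreeCells D i ∧ Bounds e f}.ncard = 2 * (i + 1) := by
  have hdim : cdim f = i + 1 := hf.1.1
  rw [← hdim, ← ncard_setOf_isFacet]
  congr 1
  ext e
  constructor
  · exact fun ⟨he, hb⟩ ↦ ⟨hb, by rw [hdim, he.1.1]⟩
  · rintro ⟨hb, hcodim⟩
    obtain rfl : cdim e = i := by omega
    exact ⟨hb.mem_freeCells hvox hf, hb⟩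

open Classical in
lemma bcount_cdim_add_one_eq_sum (e : Fin n → ℤ) (D : Set (Fin n → ℤ)) :
    bcount e D (cdim e + 1) =
      ∑ a ∈ evenCoords e, ({s | shift e a s ∈ FreeCells D (cdim e + 1)} : Finset ℤˣ).card := by
  rw [← ncard_setOf_isFacet_and e (· ∈ FreeCells D (cdim e + 1)), bcount]
  congr 1
  ext f
  exact ⟨fun ⟨hf, hb⟩ ↦ ⟨⟨hb, hf.1.1⟩, hf⟩, fun ⟨hb, hf⟩ ↦ ⟨hf, hb.1⟩⟩

open Classical in
lemma sum_bcount_eq_mul_cStar (hvox : ∀ v ∈ D, IsVoxel v) (hfin : (FreeCells D i).Finite)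
    (hfin' : (FreeCells D (i + 1)).Finite) :
    ∑ e ∈ hfin.toFinset, bcount e D (i + 1) = 2 * (i + 1) * cStar D (i + 1) := by
  have habove : ∀ e, bcount e D (i + 1) = (hfin'.toFinset.bipartiteAbove Bounds e).card :=
    fun e ↦ by simp [bcount, ← Set.ncard_coe_finset, Finset.bipartiteAbove]
  have hbelow : ∀ f ∈ hfin'.toFinset,
      (hfin.toFinset.bipartiteBelow Bounds f).card = 2 * (i + 1) := fun f hf ↦ by
    rw [← ncard_freeCells_bounding hvox (hfin'.mem_toFinset.1 hf), ← Set.ncard_coe_finset]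
    simp [Finset.bipartiteBelow]
  simp only [habove]
  rw [Finset.sum_card_bipartiteAbove_eq_sum_card_bipartiteBelow, Finset.sum_congr rfl hbelow,
    Finset.sum_const, smul_eq_mul, mul_comm, cStar, Set.ncard_eq_toFinset_card _ hfin']

end FreeCells

section Hubs

variable {n : ℕ} {D : Set (Fin n → ℤ)} {e f : Fin n → ℤ} {a b : Fin n}

lemma cdim_eq_sub_two_iff (hn : 2 ≤ n) :
    cdim e = n - 2 ↔ ∃ a b, a ≠ b ∧ evenCoords e = {a, b} := by
  have := cdim_add_card_evenCoords e
  rw [← Finset.card_eq_two]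
  omega

lemma exists_unit_iff {P : ℤˣ → Prop} : (∃ s, P s) ↔ P 1 ∨ P (-1) := by
  refine ⟨fun ⟨s, hs⟩ ↦ ?_, fun h ↦ h.elim (⟨1, ·⟩) (⟨-1, ·⟩)⟩
  obtain rfl | rfl := Int.units_eq_one_or s
  exacts [.inl hs, .inr hs]

lemma mem_freeCells_iff_of_evenCoords_eq_singleton (hvox : ∀ v ∈ D, IsVoxel v)
    (hf : evenCoords f = {a}) :
    f ∈ FreeCells D (cdim f) ↔ ¬(shift f a 1 ∈ D ↔ shift f a (-1) ∈ D) := by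
  simp only [mem_freeCells_iff hvox, mem_block_iff_of_evenCoords_eq_singleton hf,
    exists_exists_eq_and, true_and]
  rw [exists_unit_iff, exists_unit_iff]
  tauto

lemma mem_freeCells_iff_of_evenCoords_eq_pair (hvox : ∀ v ∈ D, IsVoxel v)
    (hab : a ≠ b) (he : evenCoords e = {a, b}) :
    e ∈ FreeCells D (cdim e) ↔
      (∃ s t, shift (shift e a s) b t ∈ D) ∧ ∃ s t, shift (shift e a s) b t ∉ D := by
  simp only [mem_freeCells_iff hvox, mem_block_iff_of_evenCoords_eq_pair hab he,
    exists_exists_exists_and_eq, true_and]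

/-- The two diagonals of the `2 × 2` block of `e` are the level sets of `s * t`. -/
lemma isHub_iff_exists_diagonal (hn : 2 ≤ n) (hab : a ≠ b) (he : evenCoords e = {a, b}) :
    IsHub D e ↔ ∃ r : ℤˣ, ∀ s t, shift (shift e a s) b t ∈ D ↔ s * t = r := by
  have hblock (s t : ℤˣ) : shift (shift e a s) b t ∈ Block e :=
    (mem_block_iff_of_evenCoords_eq_pair hab he).2 ⟨s, t, rfl⟩
  have hmul : ∀ s t s' t' : ℤˣ, s' * t' = s * t ↔ s' = s ∧ t' = t ∨ s' = -s ∧ t' = -t := by decide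
  constructor
  · rintro ⟨-, v, w, -, hD, hinter⟩
    have hv : v ∈ Block e := (hD.symm ▸ Set.mem_insert v {w} : v ∈ Block e ∩ D).1
    obtain ⟨s, t, rfl⟩ := (mem_block_iff_of_evenCoords_eq_pair hab he).1 hv
    obtain rfl := (interCell_shift_shift_iff hv).1 hinter
    refine ⟨s * t, fun s' t' ↦ ?_⟩
    rw [hmul, ← shift_shift_inj (e := e) hab, ← shift_shift_inj (e := e) hab]
    calc shift (shift e a s') b t' ∈ D
      _ ↔ shift (shift e a s') b t' ∈ Block e ∩ D := (and_iff_right (hblock s' t')).symm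
      _ ↔ _ := by rw [hD]; rfl
  · rintro ⟨r, hr⟩
    refine ⟨(cdim_eq_sub_two_iff hn).2 ⟨a, b, hab, he⟩, shift (shift e a 1) b r,
      shift (shift e a (-1)) b (-r), ?_, ?_, (interCell_shift_shift_iff (hblock 1 r)).2 rfl⟩
    · rw [Ne, shift_shift_inj hab]
      exact fun h ↦ absurd h.1 (by decide)
    · ext v
      constructor
      · rintro ⟨hv, hvD⟩
        obtain ⟨s, t, rfl⟩ := (mem_block_iff_of_evenCoords_eq_pair hab he).1 hv
        rw [Set.mem_insert_iff, Set.mem_singleton_iff, shift_shift_inj hab, shift_shift_inj hab,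
          ← hmul, one_mul, ← hr]
        exact hvD
      · rintro (rfl | rfl)
        · exact ⟨hblock _ _, (hr _ _).2 (one_mul r)⟩
        · exact ⟨hblock _ _, (hr _ _).2 (by simp)⟩

lemma IsHub.mem_freeCells (hn : 2 ≤ n) (hvox : ∀ v ∈ D, IsVoxel v) (h : IsHub D e) :
    e ∈ FreeCells D (n - 2) := by
  obtain ⟨a, b, hab, he⟩ := (cdim_eq_sub_two_iff hn).1 h.1
  obtain ⟨r, hr⟩ := (isHub_iff_exists_diagonal hn hab he).1 h
  rw [← h.1, mem_freeCells_iff_of_evenCoords_eq_pair hvox hab he]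
  refine ⟨⟨1, r, (hr 1 r).2 (one_mul r)⟩, 1, -r, fun hD ↦ ?_⟩
  exact units_ne_neg_self r (by simpa using ((hr 1 (-r)).1 hD).symm)

/-- The four comparisons go once around a `2 × 2` array, so the number of changes is even; it is
positive because the array is not constant, and equal to four only if `p` selects a diagonal. -/
lemma card_ne_add_card_ne_of_nonconstant : ∀ p : ℤˣ → ℤˣ → Bool, (∃ s t, p s t) → (∃ s t, ¬p s t) →
    ({s | p s 1 ≠ p s (-1)} : Finset ℤˣ).card + ({t | p 1 t ≠ p (-1) t} : Finset ℤˣ).card =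
      if ∃ r, ∀ s t, p s t ↔ s * t = r then 4 else 2 := by
  decide

open Classical in
lemma bcount_eq_ite_isHub (hn : 2 ≤ n) (hvox : ∀ v ∈ D, IsVoxel v)
    (hfree : e ∈ FreeCells D (n - 2)) : bcount e D (n - 1) = if IsHub D e then 4 else 2 := by
  have hdim : cdim e = n - 2 := hfree.1.1
  obtain ⟨a, b, hab, he⟩ := (cdim_eq_sub_two_iff hn).1 hdim
  have hface {c d : Fin n} (hcd : c ≠ d) (hc : evenCoords e = {c, d}) (s : ℤˣ) :
      shift e c s ∈ FreeCells D (cdim e + 1) ↔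
        ¬(shift (shift e c s) d 1 ∈ D ↔ shift (shift e c s) d (-1) ∈ D) := by
    rw [← cdim_shift (mem_evenCoords.1 (by simp [hc]) : Even (e c)),
      mem_freeCells_iff_of_evenCoords_eq_singleton hvox (evenCoords_shift_eq_singleton hcd hc)]
  rw [← hdim, mem_freeCells_iff_of_evenCoords_eq_pair hvox hab he] at hfree
  have hcount := card_ne_add_card_ne_of_nonconstant (fun s t ↦ decide (shift (shift e a s) b t ∈ D))
    (by simpa [-UnitsInt.univ] using hfree.1) (by simpa using hfree.2)
  rw [show n - 1 = cdim e + 1 by omega, bcount_cdim_add_one_eq_sum, he, Finset.sum_pair hab]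
  simp only [isHub_iff_exists_diagonal hn hab he, hface hab he,
    hface hab.symm (he.trans (Finset.pair_comm a b)), shift_comm (a := b) (b := a)]
  simpa [-UnitsInt.univ] using hcount

lemma finite_freeCells_sub_two (hn : 2 ≤ n) (hvox : ∀ v ∈ D, IsVoxel v)
    (hfin : (FreeCells D (n - 1)).Finite) : (FreeCells D (n - 2)).Finite := by
  refine (hfin.biUnion fun f _ ↦ finite_setOf_bounds f).subset fun e he ↦ ?_
  have hpos : bcount e D (n - 1) ≠ 0 := by
    rw [bcount_eq_ite_isHub hn hvox he]
    split_ifs <;> simp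
  obtain ⟨f, hf, hb⟩ := Set.nonempty_of_ncard_ne_zero hpos
  exact Set.mem_biUnion hf hb

lemma sum_bcount_eq_two_mul_gapCount_add_cStar (hn : 2 ≤ n) (hvox : ∀ v ∈ D, IsVoxel v)
    (hfin : (FreeCells D (n - 2)).Finite) :
    ∑ e ∈ hfin.toFinset, bcount e D (n - 1) = 2 * (gapCount D + cStar D (n - 2)) := by
  classical
  have hgap : gapCount D = (hfin.toFinset.filter (IsHub D)).card := by
    rw [gapCount, ← Set.ncard_coe_finset]
    congr 1
    ext e
    simpa using IsHub.mem_freeCells hn hvox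
  have hbcount : ∀ e ∈ hfin.toFinset, bcount e D (n - 1) = 2 * ((if IsHub D e then 1 else 0) + 1) :=
    fun e he ↦ by
      rw [bcount_eq_ite_isHub hn hvox (hfin.mem_toFinset.1 he)]
      split_ifs <;> rfl
  rw [Finset.sum_congr rfl hbcount, ← Finset.mul_sum, Finset.sum_add_distrib, ← Finset.card_filter,
    ← hgap, ← Finset.card_eq_sum_ones, cStar, Set.ncard_eq_toFinset_card _ hfin]

end Hubs

theorem gap_formula_general (n : ℕ) (hn : 2 ≤ n) (D : Set (Fin n → ℤ))
    (hfin : (FreeCells D (n - 1)).Finite) (hvox : ∀ v ∈ D, IsVoxel v) :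
    gapCount D + cStar D (n - 2) = (n - 1) * cStar D (n - 1) := by
  have hfin' : (FreeCells D (n - 2)).Finite := finite_freeCells_sub_two hn hvox hfin
  have hridges : ∑ e ∈ hfin'.toFinset, bcount e D (n - 1) =
      2 * (gapCount D + cStar D (n - 2)) := sum_bcount_eq_two_mul_gapCount_add_cStar hn hvox hfin'
  obtain ⟨m, rfl⟩ := Nat.exists_eq_add_of_le' hn
  have hfaces : ∑ e ∈ hfin'.toFinset, bcount e D (m + 1) = 2 * (m + 1) * cStar D (m + 1) :=
    sum_bcount_eq_mul_cStar hvox hfin' hfin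
  exact Nat.mul_left_cancel two_pos (hridges.symm.trans (hfaces.trans (mul_assoc ..)))

/-- The number of `(n-2)`-gaps of a digital `n`-object `D` is
`g_{n-2}(D) = (n-1)·c*_{n-1}(D) - c*_{n-2}(D)`, stated as an identity of
natural numbers. -/
theorem gap_formula (n : ℕ) (hn : 2 ≤ n) (D : Set (Fin n → ℤ))
    (hfin : D.Finite) (hvox : ∀ v ∈ D, IsVoxel v) :
    gapCount D + cStar D (n - 2) = (n - 1) * cStar D (n - 1) :=
  gap_formula_general n hn D (finite_freeCells hfin hvox (n - 1)) hvox

end DigitalGeometry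
end

section
/- Let 0 ≤ i < j ≤ n and let e be an i-cell of the n-dimensional cubical grid. Then the number of j-cells f with e < f equals 2^{j−i}·binom(n−i, j−i). (In other words, the maximum number c_{i←j} of j-cells of the grid bounded by a fixed i-cell is 2^{j−i}·binom(n−i, j−i); in particular, for j = n, the i-block B_i(e) consists of exactly 2^{n−i} voxels.) -/
/-!
A cell `f` that contains `e` arises from `e` by moving some of its even coordinates by `±1`. Each
such move makes one more coordinate odd, so `dim f - dim e` is the Hamming distance from `f` to `e`.
Counting `j`-cells above an `i`-cell therefore means counting the points of a box at Hamming
distance `j - i` from a given point: choose which `j - i` of the `n - i` even coordinates move, then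
one of the two directions for each of them.
-/

namespace DigitalGeometry

section HammingSphere

open Finset

variable {ι : Type*} [Fintype ι] [DecidableEq ι] {α : ι → Type*} [∀ k, DecidableEq (α k)]
  {t : ∀ k, Finset (α k)} {e : ∀ k, α k}

lemma filter_piFinset_filter_ne_eq (he : e ∈ Fintype.piFinset t) (S : Finset ι) :
    {f ∈ Fintype.piFinset t | ({k | f k ≠ e k} : Finset ι) = S} =
      Fintype.piFinset (S.piecewise (fun k => (t k).erase (e k)) fun k => {e k}) := by
  rw [Fintype.mem_piFinset] at he
  ext f
  simp only [mem_filter, Fintype.mem_piFinset, Finset.ext_iff, mem_univ, true_and, ← forall_and]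
  refine forall_congr' fun k => ?_
  by_cases hk : k ∈ S
  · simp [hk, and_comm]
  · simp +contextual [hk, he k]

lemma card_filter_piFinset_filter_ne_eq (he : e ∈ Fintype.piFinset t) (S : Finset ι) :
    #{f ∈ Fintype.piFinset t | ({k | f k ≠ e k} : Finset ι) = S} = ∏ k ∈ S, (#(t k) - 1) := by
  have card_coord (k : ι) :
      #(S.piecewise (fun k => (t k).erase (e k)) (fun k => {e k}) k) =
        if k ∈ S then #(t k) - 1 else 1 := by
    by_cases hk : k ∈ S
    · simp [hk, card_erase_of_mem (Fintype.mem_piFinset.1 he k)]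
    · simp [hk]
  rw [filter_piFinset_filter_ne_eq he, Fintype.card_piFinset]
  simp only [card_coord, Fintype.prod_ite_mem]

lemma card_filter_piFinset_hammingDist (he : e ∈ Fintype.piFinset t) (m : ℕ) :
    #{f ∈ Fintype.piFinset t | hammingDist f e = m} =
      ∑ S ∈ powersetCard m univ, ∏ k ∈ S, (#(t k) - 1) := by
  have support_mem : ∀ f ∈ {f ∈ Fintype.piFinset t | hammingDist f e = m},
      ({k | f k ≠ e k} : Finset ι) ∈ powersetCard m univ := fun f hf =>
    mem_powersetCard.2 ⟨subset_univ _, (mem_filter.1 hf).2⟩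
  rw [card_eq_sum_card_fiberwise support_mem]
  refine sum_congr rfl fun S hS => ?_
  rw [← card_filter_piFinset_filter_ne_eq he S, filter_filter]
  refine congrArg card (filter_congr fun f _ => and_iff_right_of_imp ?_)
  rintro rfl
  exact (mem_powersetCard.1 hS).2

lemma card_filter_piFinset_hammingDist_of_card_eq {A : Finset ι} {q : ℕ}
    (he : e ∈ Fintype.piFinset t) (ht : ∀ k, #(t k) = if k ∈ A then q + 1 else 1) (m : ℕ) :
    #{f ∈ Fintype.piFinset t | hammingDist f e = m} = q ^ m * (#A).choose m := by
  have prod_eq_pow : ∀ S ∈ powersetCard m A, ∏ k ∈ S, (#(t k) - 1) = q ^ m := fun S hS => by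
    obtain ⟨hSA, rfl⟩ := mem_powersetCard.1 hS
    exact prod_eq_pow_card fun k hk => by simp [ht, hSA hk]
  have prod_eq_zero_of_notMem : ∀ S ∈ powersetCard m univ, S ∉ powersetCard m A →
      ∏ k ∈ S, (#(t k) - 1) = 0 := fun S hS hSA => by
    obtain ⟨k, hkS, hkA⟩ := not_subset.1 fun hsub =>
      hSA (mem_powersetCard.2 ⟨hsub, (mem_powersetCard.1 hS).2⟩)
    exact prod_eq_zero hkS (by simp [ht, hkA])
  rw [card_filter_piFinset_hammingDist he,
    ← sum_subset (powersetCard_mono (subset_univ A)) prod_eq_zero_of_notMem,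
    sum_congr rfl prod_eq_pow, sum_const, card_powersetCard, smul_eq_mul, mul_comm]

end HammingSphere

section CellStar

open Finset

/-- The doubled coordinates `b` of the points and unit intervals `I(b)` of the real line that
contain `I(a)`. -/
def coordStar (a : ℤ) : Finset ℤ :=
  if Even a then {a - 1, a, a + 1} else {a}

lemma mem_coordStar {a b : ℤ} : b ∈ coordStar a ↔ a = b ∨ Odd b ∧ |a - b| = 1 := by
  rw [abs_eq zero_le_one, Int.odd_iff]
  unfold coordStar
  split_ifs with ha <;> rw [Int.even_iff] at ha <;> simp only [mem_insert, mem_singleton] <;> omega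

lemma card_coordStar (a : ℤ) : #(coordStar a) = if Even a then 3 else 1 := by
  unfold coordStar
  split_ifs
  · exact card_eq_three.2 ⟨_, _, _, by omega, by omega, by omega, rfl⟩
  · exact card_singleton a

lemma ite_odd_eq_of_mem_coordStar {a b : ℤ} (h : b ∈ coordStar a) :
    (if Odd b then 1 else 0 : ℕ) = (if Odd a then 1 else 0) + if b ≠ a then 1 else 0 := by
  rcases mem_coordStar.1 h with rfl | ⟨hb, hab⟩
  · simp
  · rw [abs_eq zero_le_one] at hab
    have hne : b ≠ a := by omega
    have ha : ¬ Odd a := by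
      rw [Int.odd_iff] at hb ⊢
      omega
    simp [ha, hb, hne]

variable {n : ℕ} {e f : Fin n → ℤ}

/-- The cells `f` with `e ≤ f`, that is, the cell `e` together with the cells it bounds. -/
def cellStar (e : Fin n → ℤ) : Finset (Fin n → ℤ) :=
  Fintype.piFinset fun k => coordStar (e k)

lemma self_mem_cellStar (e : Fin n → ℤ) : e ∈ cellStar e :=
  Fintype.mem_piFinset.2 fun _ => mem_coordStar.2 (Or.inl rfl)

lemma bounds_iff_mem_cellStar : Bounds e f ↔ cdim e < cdim f ∧ f ∈ cellStar e := by
  simp only [Bounds, cellStar, Fintype.mem_piFinset, mem_coordStar]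

lemma cdim_eq_add_hammingDist (hf : f ∈ cellStar e) : cdim f = cdim e + hammingDist f e := by
  simp only [cdim, hammingDist, card_filter, ← sum_add_distrib]
  exact sum_congr rfl fun k _ => ite_odd_eq_of_mem_coordStar (Fintype.mem_piFinset.1 hf k)

lemma card_filter_even (e : Fin n → ℤ) : #{k | Even (e k)} = n - cdim e := by
  simp only [← Int.not_odd_iff_even]
  rw [filter_not, card_sdiff_of_subset (filter_subset _ _), card_fin, cdim]

lemma card_filter_cellStar_hammingDist (e : Fin n → ℤ) (m : ℕ) :
    #{f ∈ cellStar e | hammingDist f e = m} = 2 ^ m * (n - cdim e).choose m := by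
  rw [← card_filter_even]
  refine card_filter_piFinset_hammingDist_of_card_eq (self_mem_cellStar e) (fun k => ?_) m
  simp [card_coordStar]

end CellStar

/-- The number of `j`-cells bounded by a fixed `i`-cell is `2^(j-i)·C(n-i,j-i)`. -/
theorem card_bounded_cells (n i j : ℕ) (hij : i < j) (hjn : j ≤ n)
    (e : Fin n → ℤ) (he : cdim e = i) :
    {f : Fin n → ℤ | cdim f = j ∧ Bounds e f}.ncard =
      2 ^ (j - i) * Nat.choose (n - i) (j - i) := by
  have cells_eq : {f : Fin n → ℤ | cdim f = j ∧ Bounds e f} =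
      ({f ∈ cellStar e | hammingDist f e = j - i} : Finset (Fin n → ℤ)) := by
    ext f
    simp only [Set.mem_ofPred_eq, bounds_iff_mem_cellStar, Finset.coe_filter]
    constructor
    · rintro ⟨hj, -, hf⟩
      have := cdim_eq_add_hammingDist hf
      exact ⟨hf, by omega⟩
    · rintro ⟨hf, hdist⟩
      have := cdim_eq_add_hammingDist hf
      exact ⟨by omega, by omega, hf⟩
  rw [cells_eq, Set.ncard_coe_finset, card_filter_cellStar_hammingDist, he]

end DigitalGeometry
end

section
/- Let n ≥ 2, let e be an (n−2)-cell of the n-dimensional cubical grid, and let L be an L-block centered on e, regarded as a digital n-object. Then for every 0 ≤ i ≤ n, the number of i-cells of L satisfies n·c_i(L) = (2n+i)·2^{n−i}·binom(n, i). -/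
/-!
A coordinate of a cell contributes a factor `X` when it is odd and `1` when it is even, so the
polynomial `∑ X ^ dim f` of a box of cells is a product over the coordinates. For a cell `e` with
`k` even coordinates and a voxel `v` of its block, two boxes matter: the cells of the whole block,
with polynomial `(2 X + 3) ^ k * (X + 2) ^ (n - k)`, and the cells which lie in `v` but in no other
voxel of the block, with polynomial `(X + 1) ^ k * (X + 2) ^ (n - k)`. Removing `v` from the block
removes exactly the latter. For `k = 2` the difference is `P = (X + 2) ^ (n - 1) * (3 X + 4)`.

With `Q = (X + 2) ^ n`, the splitting `3 X + 4 = 2 (X + 2) + X` gives `n P = 2 n Q + X Q'`. As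
`X d/dX` multiplies the `i`-th coefficient by `i`, that of `n P` is `2 n + i` times that of `Q`.
-/

namespace DigitalGeometry

section GeneratingPolynomial

open Polynomial

/-- The dimension generating polynomial of a finite set of cells: its `i`-th coefficient is the
number of `i`-cells in the set. -/
noncomputable def dimPoly {n : ℕ} (T : Finset (Fin n → ℤ)) : ℤ[X] :=
  ∑ f ∈ T, X ^ cdim f

/-- The dimension generating polynomial of a finite set of cells of the one-dimensional grid, each
given by its single coordinate. -/
noncomputable def coordPoly (S : Finset ℤ) : ℤ[X] :=
  ∑ x ∈ S, if Odd x then X else 1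

lemma coeff_dimPoly {n : ℕ} (T : Finset (Fin n → ℤ)) (i : ℕ) :
    (dimPoly T).coeff i = (T.filter fun f => cdim f = i).card := by
  simp only [dimPoly, finsetSum_coeff, coeff_X_pow, Finset.natCast_card_filter, eq_comm (a := i)]

lemma dimPoly_piFinset {n : ℕ} (S : Fin n → Finset ℤ) :
    dimPoly (Fintype.piFinset S) = ∏ j, coordPoly (S j) := by
  simp only [dimPoly, coordPoly, Finset.prod_univ_sum]
  refine Finset.sum_congr rfl fun f _ => ?_
  rw [Finset.prod_ite, Finset.prod_const, Finset.prod_const_one, mul_one, cdim]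

lemma coordPoly_Icc_of_odd {m : ℤ} (hm : Odd m) :
    coordPoly (Finset.Icc (m - 1) (m + 1)) = X + 2 := by
  have hIcc : Finset.Icc (m - 1) (m + 1) = {m - 1, m, m + 1} := by grind
  have hpred : ¬ Odd (m - 1) := by grind
  have hsucc : ¬ Odd (m + 1) := by grind
  rw [coordPoly, hIcc, Finset.sum_insert (by grind), Finset.sum_pair (by grind),
    if_neg hpred, if_pos hm, if_neg hsucc]
  ring

lemma coordPoly_Icc_of_not_odd {m : ℤ} (hm : ¬ Odd m) :
    coordPoly (Finset.Icc (m - 2) (m + 2)) = 2 * X + 3 := by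
  have hIcc : Finset.Icc (m - 2) (m + 2) = {m - 2, m - 1, m, m + 1, m + 2} := by grind
  have hsub_two : ¬ Odd (m - 2) := by grind
  have hpred : Odd (m - 1) := by grind
  have hsucc : Odd (m + 1) := by grind
  have hadd_two : ¬ Odd (m + 2) := by grind
  rw [coordPoly, hIcc, Finset.sum_insert (by grind), Finset.sum_insert (by grind),
    Finset.sum_insert (by grind), Finset.sum_pair (by grind),
    if_neg hsub_two, if_pos hpred, if_neg hm, if_pos hsucc, if_neg hadd_two]
  ring

lemma coordPoly_erase_Icc_of_odd {m p : ℤ} (hm : Odd m) (hp : |p - m| = 1) :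
    coordPoly ((Finset.Icc (m - 1) (m + 1)).erase p) = X + 1 := by
  have hreflect : (Finset.Icc (m - 1) (m + 1)).erase p = {m, 2 * m - p} := by grind
  have heven : ¬ Odd (2 * m - p) := by grind
  rw [coordPoly, hreflect, Finset.sum_pair (by grind), if_pos hm, if_neg heven]

lemma coeff_X_mul_derivative {R : Type*} [CommSemiring R] (p : R[X]) (i : ℕ) :
    (X * derivative p).coeff i = i * p.coeff i := by
  cases i with
  | zero => simp
  | succ k => rw [coeff_X_mul, coeff_derivative, Nat.cast_succ, mul_comm]

lemma natCast_mul_coeff_X_mul_X_add_C_pow {R : Type*} [CommSemiring R] (c : R) (n i : ℕ) :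
    (n : R) * (X * (X + C c) ^ (n - 1)).coeff i = i * (c ^ (n - i) * n.choose i) := by
  rw [← coeff_X_add_C_pow, ← coeff_X_mul_derivative, derivative_X_add_C_pow, mul_left_comm,
    coeff_C_mul]

lemma natCast_mul_coeff_X_add_two_pow_mul {R : Type*} [CommSemiring R] {n : ℕ} (hn : n ≠ 0)
    (i : ℕ) :
    (n : R) * ((X + 2) ^ (n - 1) * (3 * X + 4) : R[X]).coeff i =
      (2 * n + i) * (2 ^ (n - i) * n.choose i) := by
  have hsplit : ((X + 2) ^ (n - 1) * (3 * X + 4) : R[X]) =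
      C 2 * (X + C 2) ^ n + X * (X + C 2) ^ (n - 1) := by
    rw [← pow_sub_one_mul hn (X + C 2), map_ofNat C 2]
    ring
  rw [hsplit, coeff_add, coeff_C_mul, mul_add, natCast_mul_coeff_X_mul_X_add_C_pow,
    coeff_X_add_C_pow]
  ring

end GeneratingPolynomial

section Faces

variable {n : ℕ} {e f v w : Fin n → ℤ}

/-- `IsFace f w` : the cell `f` lies in the voxel `w`, that is, `f = w` or `f` bounds `w`. Only
meaningful when `w` is a voxel, see `isFace_iff`. -/
def IsFace (f w : Fin n → ℤ) : Prop := ∀ j, |f j - w j| ≤ 1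

lemma cdim_of_isVoxel (hw : IsVoxel w) : cdim w = n := by
  simp [cdim, Finset.filter_true_of_mem fun j _ => hw j]

lemma cdim_lt_of_not_isVoxel (hf : ¬ IsVoxel f) : cdim f < n := by
  obtain ⟨j, hj⟩ := not_forall.1 hf
  calc cdim f < (Finset.univ : Finset (Fin n)).card :=
        Finset.card_lt_card (Finset.filter_ssubset.2 ⟨j, Finset.mem_univ j, hj⟩)
    _ = n := Finset.card_fin n

lemma isFace_iff (hw : IsVoxel w) : IsFace f w ↔ f = w ∨ Bounds f w := by
  constructor
  · intro h
    by_cases hf : IsVoxel f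
    · left
      ext j
      grind [h j, hf j, hw j]
    · right
      refine ⟨(cdim_lt_of_not_isVoxel hf).trans_eq (cdim_of_isVoxel hw).symm, fun j => ?_⟩
      grind [h j, hw j]
  · rintro (rfl | ⟨-, h⟩) j
    · simp
    · grind [h j]

lemma mem_block_iff (he : ¬ IsVoxel e) : w ∈ Block e ↔ IsVoxel w ∧ IsFace e w := by
  refine and_congr_right fun hw => ?_
  have hne : e ≠ w := fun h => he (h ▸ hw)
  simp [isFace_iff hw, hne]

lemma not_isVoxel_of_mem_block (hv : v ∈ Block e) : ¬ IsVoxel e := fun he =>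
  (hv.2.1.trans_eq (cdim_of_isVoxel hv.1)).ne (cdim_of_isVoxel he)

lemma mem_cells_iff {D : Set (Fin n → ℤ)} (hD : ∀ w ∈ D, IsVoxel w) {i : ℕ} :
    f ∈ Cells D i ↔ cdim f = i ∧ ∃ w ∈ D, IsFace f w := by
  refine and_congr_right fun _ => ⟨?_, ?_⟩
  · rintro (hf | ⟨w, hw, h⟩)
    · exact ⟨f, hf, (isFace_iff (hD f hf)).2 (Or.inl rfl)⟩
    · exact ⟨w, hw, (isFace_iff (hD w hw)).2 (Or.inr h)⟩
  · rintro ⟨w, hw, h⟩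
    rcases (isFace_iff (hD w hw)).1 h with rfl | h
    · exact Or.inl hw
    · exact Or.inr ⟨w, hw, h⟩

lemma cCount_eq_coeff_dimPoly {D : Set (Fin n → ℤ)} (hD : ∀ w ∈ D, IsVoxel w)
    {T : Finset (Fin n → ℤ)} (hT : ∀ f, f ∈ T ↔ ∃ w ∈ D, IsFace f w) (i : ℕ) :
    (cCount D i : ℤ) = (dimPoly T).coeff i := by
  have hcells : Cells D i = ↑(T.filter fun f => cdim f = i) := by
    ext f
    rw [mem_cells_iff hD, Finset.mem_coe, Finset.mem_filter, hT, and_comm]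
  rw [cCount, hcells, Set.ncard_coe_finset, coeff_dimPoly]

end Faces

section PuncturedBlock

open Polynomial

variable {n : ℕ} {e f v : Fin n → ℤ}

/-- The `j`-th coordinates of the cells of the block centered on a cell `e` with `e j = m`, as used
in `blockCells`. -/
noncomputable def blockFactor (m : ℤ) : Finset ℤ :=
  if Odd m then Finset.Icc (m - 1) (m + 1) else Finset.Icc (m - 2) (m + 2)

/-- The `j`-th coordinates, for `e j = m` and `v j = y`, of the cells that lie in the voxel `v` and
in no other voxel of the block centered on `e`. When `m` is even, a cell of `v` with `j`-th
coordinate `m` also lies in the mirror image of `v` in the hyperplane through `e`. -/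
noncomputable def ownFactor (m y : ℤ) : Finset ℤ :=
  if Odd m then Finset.Icc (y - 1) (y + 1) else (Finset.Icc (y - 1) (y + 1)).erase m

/-- The cells, of all dimensions, of the block centered on the cell `e`, as a box. It has this
meaning only when `e` is not a voxel: `Block e` is empty for a voxel `e`. -/
noncomputable def blockCells (e : Fin n → ℤ) : Finset (Fin n → ℤ) :=
  Fintype.piFinset fun j => blockFactor (e j)

/-- The cells, of all dimensions, of a voxel `v` of the block centered on `e` that lie in no other
voxel of this block, as a box. -/
noncomputable def ownCells (e v : Fin n → ℤ) : Finset (Fin n → ℤ) :=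
  Fintype.piFinset fun j => ownFactor (e j) (v j)

lemma mem_blockFactor_iff {m x : ℤ} :
    x ∈ blockFactor m ↔ ∃ y, Odd y ∧ |m - y| ≤ 1 ∧ |x - y| ≤ 1 := by
  simp only [blockFactor, abs_le, Int.odd_iff]
  split_ifs with hm <;> rw [Finset.mem_Icc]
  · exact ⟨fun _ => ⟨m, by omega⟩, fun ⟨y, h⟩ => by omega⟩
  · refine ⟨fun _ => ?_, fun ⟨_, _⟩ => by omega⟩
    rcases le_total x m with hxm | hmx
    · exact ⟨m - 1, by omega⟩
    · exact ⟨m + 1, by omega⟩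

lemma mem_ownFactor_iff {m x y : ℤ} (hy : Odd y) (hm : |m - y| ≤ 1) :
    x ∈ ownFactor m y ↔
      |x - y| ≤ 1 ∧ ∀ z, Odd z → |m - z| ≤ 1 → |x - z| ≤ 1 → z = y := by
  simp only [ownFactor, abs_le, Int.odd_iff] at hy hm ⊢
  split_ifs with hmodd
  · rw [Finset.mem_Icc]
    exact ⟨fun h => ⟨by omega, fun z => by omega⟩, fun h => by omega⟩
  · rw [Finset.mem_erase, Finset.mem_Icc]
    refine ⟨fun h => ⟨by omega, fun z => by omega⟩, fun ⟨hxy, honly⟩ => ⟨?_, by omega⟩⟩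
    rintro rfl
    have hmirror : 2 * x - y = y := honly _ (by omega) (by omega) (by omega)
    omega

lemma mem_blockCells_iff (he : ¬ IsVoxel e) :
    f ∈ blockCells e ↔ ∃ w ∈ Block e, IsFace f w := by
  simp only [blockCells, Fintype.mem_piFinset, mem_blockFactor_iff, mem_block_iff he,
    Classical.skolem, forall_and, and_assoc, IsVoxel, IsFace]

lemma mem_ownCells_iff (hv : v ∈ Block e) :
    f ∈ ownCells e v ↔ IsFace f v ∧ ∀ w ∈ Block e, IsFace f w → w = v := by
  have hblock := fun w => mem_block_iff (w := w) (not_isVoxel_of_mem_block hv)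
  obtain ⟨hodd, hface⟩ := (hblock v).1 hv
  simp only [ownCells, Fintype.mem_piFinset, mem_ownFactor_iff (hodd _) (hface _), forall_and,
    hblock]
  refine and_congr_right fun hfv => ⟨fun h w hw hfw => ?_, fun h j z hz hez hfz => ?_⟩
  · exact funext fun j => h j (w j) (hw.1 j) (hw.2 j) (hfw j)
  · -- membership in the block is coordinatewise, so `v` may be changed in a single coordinate
    have hupdate : Function.update v j z = v := by
      refine h _ ⟨?_, ?_⟩ ?_
      · exact (Function.forall_update_iff v fun _ y => Odd y).2 ⟨hz, fun k _ => hodd k⟩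
      · exact (Function.forall_update_iff v fun k y => |e k - y| ≤ 1).2
          ⟨hez, fun k _ => hface k⟩
      · exact (Function.forall_update_iff v fun k y => |f k - y| ≤ 1).2 ⟨hfz, fun k _ => hfv k⟩
    simpa using congrFun hupdate j

lemma ownCells_subset_blockCells (hv : v ∈ Block e) : ownCells e v ⊆ blockCells e := fun _ hf =>
  (mem_blockCells_iff (not_isVoxel_of_mem_block hv)).2 ⟨v, hv, ((mem_ownCells_iff hv).1 hf).1⟩

lemma mem_blockCells_sdiff_ownCells_iff (hv : v ∈ Block e) :
    f ∈ blockCells e \ ownCells e v ↔ ∃ w ∈ Block e \ {v}, IsFace f w := by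
  rw [Finset.mem_sdiff, mem_blockCells_iff (not_isVoxel_of_mem_block hv), mem_ownCells_iff hv]
  constructor
  · rintro ⟨⟨w, hw, hfw⟩, hown⟩
    by_contra! hnone
    have honly : ∀ u ∈ Block e, IsFace f u → u = v := fun u hu hfu =>
      by_contra fun huv => hnone u ⟨hu, huv⟩ hfu
    exact hown ⟨honly w hw hfw ▸ hfw, honly⟩
  · rintro ⟨w, ⟨hw, hwv⟩, hfw⟩
    exact ⟨⟨w, hw, hfw⟩, fun hown => hwv (hown.2 w hw hfw)⟩

lemma prod_ite_odd {M : Type*} [CommMonoid M] (e : Fin n → ℤ) (p q : M) :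
    ∏ j, (if Odd (e j) then p else q) = p ^ cdim e * q ^ (n - cdim e) := by
  have hcard : (Finset.univ.filter fun j => ¬ Odd (e j)).card = n - cdim e := by
    rw [← Finset.compl_filter, Finset.card_compl, Fintype.card_fin, cdim]
  rw [Finset.prod_ite, Finset.prod_const, Finset.prod_const, hcard, cdim]

lemma dimPoly_blockCells (e : Fin n → ℤ) :
    dimPoly (blockCells e) = (X + 2) ^ cdim e * (2 * X + 3) ^ (n - cdim e) := by
  rw [blockCells, dimPoly_piFinset, ← prod_ite_odd]
  refine Finset.prod_congr rfl fun j _ => ?_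
  by_cases hj : Odd (e j)
  · rw [blockFactor, if_pos hj, if_pos hj, coordPoly_Icc_of_odd hj]
  · rw [blockFactor, if_neg hj, if_neg hj, coordPoly_Icc_of_not_odd hj]

lemma dimPoly_ownCells (hv : v ∈ Block e) :
    dimPoly (ownCells e v) = (X + 2) ^ cdim e * (X + 1) ^ (n - cdim e) := by
  obtain ⟨hodd, hface⟩ := (mem_block_iff (not_isVoxel_of_mem_block hv)).1 hv
  rw [ownCells, dimPoly_piFinset, ← prod_ite_odd]
  refine Finset.prod_congr rfl fun j _ => ?_
  by_cases hj : Odd (e j)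
  · rw [ownFactor, if_pos hj, if_pos hj, coordPoly_Icc_of_odd (hodd j)]
  · have hdist : |e j - v j| = 1 := by grind [hodd j, hface j]
    rw [ownFactor, if_neg hj, if_neg hj, coordPoly_erase_Icc_of_odd (hodd j) hdist]

lemma dimPoly_blockCells_sdiff_ownCells (hv : v ∈ Block e) :
    dimPoly (blockCells e \ ownCells e v) =
      (X + 2) ^ cdim e * ((2 * X + 3) ^ (n - cdim e) - (X + 1) ^ (n - cdim e)) := by
  rw [mul_sub, ← dimPoly_blockCells, ← dimPoly_ownCells hv]
  exact Finset.sum_sdiff_eq_sub (ownCells_subset_blockCells hv)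

lemma dimPoly_blockCells_sdiff_ownCells_of_cdim_eq (hn : 2 ≤ n) (he : cdim e = n - 2)
    (hv : v ∈ Block e) :
    dimPoly (blockCells e \ ownCells e v) = (X + 2) ^ (n - 1) * (3 * X + 4) := by
  obtain ⟨m, rfl⟩ := Nat.exists_eq_add_of_le' hn
  rw [dimPoly_blockCells_sdiff_ownCells hv, he, Nat.add_sub_cancel, Nat.add_sub_cancel_left,
    show m + 2 - 1 = m + 1 from rfl]
  ring

end PuncturedBlock

/-- The number of `i`-cells of an `L`-block centered on an `(n-2)`-cell `e`
satisfies `n·c_i(L) = (2n+i)·2^(n-i)·C(n,i)`. -/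
theorem cells_of_Lblock (n : ℕ) (hn : 2 ≤ n) (e : Fin n → ℤ)
    (he : cdim e = n - 2) (v : Fin n → ℤ) (hv : v ∈ Block e)
    (i : ℕ) (hi : i ≤ n) :
    n * cCount (Block e \ {v}) i = (2 * n + i) * (2 ^ (n - i) * Nat.choose n i) := by
  have hcount : (cCount (Block e \ {v}) i : ℤ) = (dimPoly (blockCells e \ ownCells e v)).coeff i :=
    cCount_eq_coeff_dimPoly (fun w hw => hw.1.1)
      (fun f => mem_blockCells_sdiff_ownCells_iff hv) i
  zify
  rw [hcount, dimPoly_blockCells_sdiff_ownCells_of_cdim_eq hn he hv,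
    natCast_mul_coeff_X_add_two_pow_mul (by omega)]

end DigitalGeometry
end

section
/- Let n ≥ 2, let e be an (n−2)-cell of the n-dimensional cubical grid, and let V be a nonempty set of voxels each of which is bounded by e (so V ⊆ B_{n−2}(e)). Then exactly one of the following five cases occurs: (i) V is a singleton; (ii) V = B_{n−1}(f) for some (n−1)-cell f with e < f (two strictly (n−1)-adjacent voxels); (iii) V = {v1, v2} for two distinct voxels with v1 ∩ v2 = e (two strictly (n−2)-adjacent voxels, an (n−2)-gap configuration with hub e); (iv) V is an L-block centered on e (three voxels); (v) V = B_{n−2}(e) (all four voxels). -/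
/-!
The block of an `i`-cell `e` is a product of two-point sets over the `n - i` even coordinates of
`e`, so for an `(n-2)`-cell it has four voxels, and the cases other than (ii) and (iii) are told
apart by the cardinality of `V` alone. If `V = {v, w}` with `v ≠ w`, then `v` and `w` meet in a
unique cell, which contains `e`. It is either `e` itself, which is case (iii), or an `(n-1)`-cell
`f` bounded by `e`; in the latter event `Block f` has two voxels, hence equals `V`, which is
case (ii).
-/

namespace DigitalGeometry

theorem exists_eq_sdiff_singleton_iff_ncard {α : Type*} {s t : Set α} (hst : s ⊆ t)
    (ht : t.Finite) : (∃ a ∈ t, s = t \ {a}) ↔ s.ncard + 1 = t.ncard := by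
  constructor
  · rintro ⟨a, ha, rfl⟩
    exact Set.ncard_sdiff_singleton_add_one ha ht
  · intro h
    obtain ⟨a, ha, rfl⟩ := (Set.exists_eq_insert_iff_ncard (ht.subset hst)).2 ⟨hst, h⟩
    exact ⟨a, Set.mem_insert a s, by simp [ha]⟩

theorem existsUnique_case_of_le_four {c : ℕ} {p : Prop} (hpos : 0 < c) (hle : c ≤ 4)
    (hp : p → c = 2) :
    ∃! k : Fin 5, ![c = 1, c = 2 ∧ ¬ p, p, c + 1 = 4, c = 4] k := by
  by_cases h : p
  · obtain rfl := hp h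
    simp [h, ExistsUnique, Fin.forall_fin_succ]
  · interval_cases c <;> simp [h, ExistsUnique, Fin.forall_fin_succ]

section

variable {n : ℕ} {e f v w : Fin n → ℤ} {V : Set (Fin n → ℤ)}

theorem cdim_eq_iff_isVoxel : cdim v = n ↔ IsVoxel v := by
  simpa [cdim, IsVoxel] using Finset.card_filter_eq_iff (s := Finset.univ) (p := fun j => Odd (v j))

theorem cdim_lt_of_mem_block (hv : v ∈ Block e) : cdim e < n :=
  hv.2.1.trans_eq (cdim_eq_iff_isVoxel.2 hv.1)

theorem Bounds.ne (h : Bounds e f) : e ≠ f := by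
  rintro rfl
  exact h.1.false

theorem bounds_iff_ne_and_forall :
    Bounds e f ↔ e ≠ f ∧ ∀ j, e j = f j ∨ (Odd (f j) ∧ |e j - f j| = 1) := by
  refine ⟨fun h => ⟨h.ne, h.2⟩, fun ⟨hne, h⟩ => ⟨Finset.card_lt_card ?_, h⟩⟩
  have hodd : ∀ j, Odd (e j) → Odd (f j) := by grind
  obtain ⟨i, hi⟩ := Function.ne_iff.1 hne
  have hi_odd : Odd (f i) ∧ ¬ Odd (e i) := by grind
  rw [Finset.ssubset_iff_of_subset (Finset.monotone_filter_right _ fun j _ => hodd j)]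
  exact ⟨i, by simpa using hi_odd⟩

theorem block_eq_piFinset (he : cdim e < n) :
    Block e = Fintype.piFinset fun j => if Odd (e j) then {e j} else {e j - 1, e j + 1} := by
  have hne : ∀ v, IsVoxel v → e ≠ v := by
    rintro v hv rfl
    exact he.ne (cdim_eq_iff_isVoxel.2 hv)
  ext v
  simp only [Block, Set.mem_ofPred_eq, bounds_iff_ne_and_forall, Finset.mem_coe,
    Fintype.mem_piFinset]
  constructor
  · rintro ⟨hv, -, h⟩ j
    have := hv j
    have := h j
    grind
  · intro h
    have hv : IsVoxel v := fun j => by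
      have := h j
      grind
    refine ⟨hv, hne v hv, fun j => ?_⟩
    have := hv j
    have := h j
    grind

theorem ncard_block {d : ℕ} (he : cdim e + d = n) (hd : 0 < d) : (Block e).ncard = 2 ^ d := by
  have hcard : ∀ j, (if Odd (e j) then {e j} else {e j - 1, e j + 1} : Finset ℤ).card =
      if Odd (e j) then 1 else 2 := fun j => by
    split_ifs
    · exact Finset.card_singleton _
    · exact Finset.card_pair (by omega)
  have heven : (Finset.univ.filter fun j => ¬ Odd (e j)).card = d := by
    rw [Finset.filter_not, Finset.card_sdiff_of_subset (Finset.filter_subset _ _),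
      Finset.card_univ, Fintype.card_fin]
    exact Nat.sub_eq_of_eq_add' he.symm
  rw [block_eq_piFinset (by omega), Set.ncard_coe_finset, Fintype.card_piFinset]
  simp only [hcard, Finset.prod_ite, Finset.prod_const_one, Finset.prod_const, one_mul, heven]

theorem finite_block (e : Fin n → ℤ) : (Block e).Finite := by
  obtain hempty | ⟨v, hv⟩ := (Block e).eq_empty_or_nonempty
  · exact hempty ▸ Set.finite_empty
  · exact block_eq_piFinset (cdim_lt_of_mem_block hv) ▸ Finset.finite_toSet _

theorem InterCell.symm (h : InterCell v w e) : InterCell w v e := fun j => by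
  have := h j
  grind

theorem InterCell.unique (he : InterCell v w e) (hf : InterCell v w f) : e = f :=
  funext fun j => by
    have := he j
    have := hf j
    omega

theorem InterCell.left_mem_block (h : InterCell v w e) (hv : IsVoxel v) (hvw : v ≠ w) :
    v ∈ Block e := by
  refine ⟨hv, bounds_iff_ne_and_forall.2 ⟨?_, fun j => ?_⟩⟩
  · rintro rfl
    refine hvw (funext fun j => ?_)
    have := h j
    omega
  · have := hv j
    have := h j
    grind

theorem exists_interCell (hv : v ∈ Block e) (hw : w ∈ Block e) :
    ∃ f, InterCell v w f ∧ (e = f ∨ Bounds e f) := by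
  have hopp : ∀ j, v j = w j ∨ e j + 1 = max (v j) (w j) ∧ e j - 1 = min (v j) (w j) := fun j => by
    have := hv.1 j
    have := hw.1 j
    have := hv.2.2 j
    have := hw.2.2 j
    grind
  refine ⟨fun j => if v j = w j then v j else e j, fun j => ?_, ?_⟩
  · have := hopp j
    grind
  · rw [bounds_iff_ne_and_forall, or_iff_not_imp_left]
    refine fun hne => ⟨hne, fun j => ?_⟩
    have := hv.2.2 j
    grind

theorem exists_bounds_interCell_iff (hv : v ∈ Block e) (hw : w ∈ Block e) :
    (∃ f, Bounds e f ∧ InterCell v w f) ↔ ¬ InterCell v w e := by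
  constructor
  · rintro ⟨f, hef, hf⟩ he
    exact hef.ne (he.unique hf)
  · intro he
    obtain ⟨f, hf, rfl | hef⟩ := exists_interCell hv hw
    · exact absurd hf he
    · exact ⟨f, hef, hf⟩

theorem block_eq_pair_iff_interCell (hf : cdim f + 1 = n) (hv : IsVoxel v) (hw : IsVoxel w)
    (hvw : v ≠ w) : Block f = {v, w} ↔ InterCell v w f := by
  constructor
  · intro h
    have hvf : v ∈ Block f := by simp [h]
    have hwf : w ∈ Block f := by simp [h]
    obtain ⟨g, hg, rfl | hfg⟩ := exists_interCell hvf hwf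
    · exact hg
    · have := cdim_lt_of_mem_block (hg.left_mem_block hv hvw)
      have := hfg.1
      omega
  · intro h
    have hsub : {v, w} ⊆ Block f :=
      Set.pair_subset (h.left_mem_block hv hvw) (h.symm.left_mem_block hw hvw.symm)
    refine (Set.eq_of_subset_of_ncard_le hsub ?_ (finite_block f)).symm
    rw [ncard_block hf one_pos, Set.ncard_pair hvw, pow_one]

theorem exists_pair_eq_block_iff_not_interCell (he : cdim e + 2 = n) (hv : v ∈ Block e)
    (hw : w ∈ Block e) (hvw : v ≠ w) :
    (∃ f, cdim f = n - 1 ∧ Bounds e f ∧ {v, w} = Block f) ↔ ¬ InterCell v w e := by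
  rw [← exists_bounds_interCell_iff hv hw]
  refine exists_congr fun f => ⟨?_, ?_⟩
  · rintro ⟨hf, hef, h⟩
    exact ⟨hef, (block_eq_pair_iff_interCell (by omega) hv.1 hw.1 hvw).1 h.symm⟩
  · rintro ⟨hef, h⟩
    have hf : cdim f = n - 1 := by
      have := cdim_lt_of_mem_block (h.left_mem_block hv.1 hvw)
      have := hef.1
      omega
    exact ⟨hf, hef, ((block_eq_pair_iff_interCell (by omega) hv.1 hw.1 hvw).2 h).symm⟩

theorem exists_eq_block_iff_ncard_eq_two_and_not_interCell (he : cdim e + 2 = n)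
    (hV : V ⊆ Block e) :
    (∃ f, cdim f = n - 1 ∧ Bounds e f ∧ V = Block f) ↔
      V.ncard = 2 ∧ ¬ ∃ v w, v ≠ w ∧ V = {v, w} ∧ InterCell v w e := by
  constructor
  · rintro ⟨f, hf, hef, rfl⟩
    refine ⟨ncard_block (d := 1) (by omega) one_pos, ?_⟩
    rintro ⟨v, w, hvw, hpair, hinter⟩
    rw [hpair, Set.pair_subset_iff] at hV
    exact (exists_pair_eq_block_iff_not_interCell he hV.1 hV.2 hvw).1
      ⟨f, hf, hef, hpair.symm⟩ hinter
  · rintro ⟨hcard, hinter⟩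
    obtain ⟨v, w, hvw, rfl⟩ := Set.ncard_eq_two.1 hcard
    rw [Set.pair_subset_iff] at hV
    exact (exists_pair_eq_block_iff_not_interCell he hV.1 hV.2 hvw).2
      fun h => hinter ⟨v, w, hvw, rfl, h⟩

end

/-- Classification of nonempty sets of voxels bounded by an `(n-2)`-cell `e`:
exactly one of five cases occurs: a singleton; an `(n-1)`-block centered on an
`(n-1)`-cell bounded by `e`; an `(n-2)`-gap configuration with hub `e`; an
`L`-block centered on `e`; or the whole `(n-2)`-block `B_{n-2}(e)`. -/
theorem voxel_set_classification (n : ℕ) (hn : 2 ≤ n) (e : Fin n → ℤ)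
    (he : cdim e = n - 2) (V : Set (Fin n → ℤ)) (hV : V ⊆ Block e)
    (hne : V.Nonempty) :
    ∃! k : Fin 5,
      ![∃ v : Fin n → ℤ, V = {v},
        ∃ f : Fin n → ℤ, cdim f = n - 1 ∧ Bounds e f ∧ V = Block f,
        ∃ v1 v2 : Fin n → ℤ, v1 ≠ v2 ∧ V = {v1, v2} ∧ InterCell v1 v2 e,
        ∃ v ∈ Block e, V = Block e \ {v},
        V = Block e] k := by
  have hcodim : cdim e + 2 = n := by omega
  have hfour : (Block e).ncard = 4 := ncard_block hcodim two_pos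
  have hpos : 0 < V.ncard := (Set.ncard_pos ((finite_block e).subset hV)).2 hne
  have hle : V.ncard ≤ 4 := hfour ▸ Set.ncard_le_ncard hV (finite_block e)
  have hblock : V = Block e ↔ V.ncard = 4 :=
    ⟨fun h => h ▸ hfour, fun h => Set.eq_of_subset_of_ncard_le hV (by omega) (finite_block e)⟩
  have hgap : (∃ v1 v2, v1 ≠ v2 ∧ V = {v1, v2} ∧ InterCell v1 v2 e) → V.ncard = 2 := by
    rintro ⟨v1, v2, hv, rfl, -⟩
    exact Set.ncard_pair hv
  rw [← Set.ncard_eq_one, exists_eq_block_iff_ncard_eq_two_and_not_interCell hcodim hV,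
    exists_eq_sdiff_singleton_iff_ncard hV (finite_block e), hfour, hblock]
  exact existsUnique_case_of_le_four hpos hle hgap

end DigitalGeometry
end
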